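/- Let p, q > 1, μ > 0, b = (pq−1)(2pq+p+q)/(4pq(p+1)(q+1)(1+μ)), and Γ, γ > 0 with γ^p = Γ(p+1)/(pq−1), Γ^q = γ(q+1)/(pq−1). Define α₂ = −4bγ^p p(p−1)(q+1)[2(q+μ)+3(1−μ)]/(pq−1), β₂ = −4bΓ^q q(q−1)(p+1)[2(pμ+1)−3(1−μ)]/(pq−1), α₄ = −bγ^p p(p−1)(q+1)²/(pq−1), β₄ = −bΓ^q q(q−1)(p+1)²/(pq−1), A₂₂ = q/(Γ(2pq+p+q)), B₂₂ = p/(γ(2pq+p+q)), ẽ = 12pqγ(q+1)(1−μ)/(3pq+p+q−1), A₄₂ = −ẽ/(Γγ(2pq+p+q)), B₄₂ = ((p+1)/(q+1))·ẽ/(γ²(2pq+p+q)). Then A₂₂α₂ + B₂₂β₂ + A₄₂α₄ + B₄₂β₄ = −2. -/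

import Mathlib

/-!
The hypotheses on `Γ, γ` replace `γ ^ p` and `Γ ^ q` by rational expressions, after which `Γ` and `γ`
cancel. Write `D = pq - 1` and `T = 3pq + p + q - 1`. Inserting `b`, the first two terms become
`-(2D(1+μ) + 3(1-μ)(p-q)) / (D(1+μ))` and the last two
`3(1-μ)(p(p-1)(q+1)² - q(q-1)(p+1)²) / (D(1+μ)T)`. The factorization
`p(p-1)(q+1)² - q(q-1)(p+1)² = (p-q)T` makes the `(1-μ)(p-q)` contributions cancel, leaving `-2`.
-/

/-- The key algebraic identity A₂₂α₂ + B₂₂β₂ + A₄₂α₄ + B₄₂β₄ = −2 for the null-mode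
projection of the potential term. -/
theorem stmt_14 (p q μ Γ γ b : ℝ) (hp : 1 < p) (hq : 1 < q) (hμ : 0 < μ)
    (hΓ : 0 < Γ) (hγ : 0 < γ)
    (h1 : γ ^ p = Γ * ((p + 1) / (p * q - 1)))
    (h2 : Γ ^ q = γ * ((q + 1) / (p * q - 1)))
    (hb : b = (p * q - 1) * (2 * p * q + p + q) / (4 * p * q * (p + 1) * (q + 1) * (1 + μ))) :
    (q / (Γ * (2 * p * q + p + q))) *
        (-(4 * b * γ ^ p * p * (p - 1) * (q + 1) * (2 * (q + μ) + 3 * (1 - μ)) / (p * q - 1)))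
      + (p / (γ * (2 * p * q + p + q))) *
        (-(4 * b * Γ ^ q * q * (q - 1) * (p + 1) * (2 * (p * μ + 1) - 3 * (1 - μ)) / (p * q - 1)))
      + (-(12 * p * q * γ * (q + 1) * (1 - μ) / (3 * p * q + p + q - 1)) /
          (Γ * γ * (2 * p * q + p + q))) *
        (-(b * γ ^ p * p * (p - 1) * (q + 1) ^ 2 / (p * q - 1)))
      + (((p + 1) / (q + 1)) *
          ((12 * p * q * γ * (q + 1) * (1 - μ) / (3 * p * q + p + q - 1)) /
            (γ ^ 2 * (2 * p * q + p + q)))) *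
        (-(b * Γ ^ q * q * (q - 1) * (p + 1) ^ 2 / (p * q - 1)))
      = -2 := by
  have hD : p * q - 1 ≠ 0 := by nlinarith
  have hS : 2 * p * q + p + q ≠ 0 := by positivity
  have hT : 3 * p * q + p + q - 1 ≠ 0 := by nlinarith
  have hp1 : p + 1 ≠ 0 := by positivity
  have hq1 : q + 1 ≠ 0 := by positivity
  have hm1 : 1 + μ ≠ 0 := by positivity
  have hp0 : p ≠ 0 := by positivity
  have hq0 : q ≠ 0 := by positivity
  rw [h1, h2, hb]
  -- Opaque names for the denominators keep the cleared expression from being expanded early.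
  generalize hDd : p * q - 1 = D at *
  generalize hSd : 2 * p * q + p + q = S at *
  generalize hTd : 3 * p * q + p + q - 1 = T at *
  field_simp
  subst hDd hTd
  ring
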